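/- arXiv:1303.1152 — 2 statements merged into one kernel-verified Lean document; each statement's English description precedes it below -/
import Mathlib

section
/- (Scaling up improves for non-negative vectors) Let x ∈ ℝⁿ lie in the filled simplex ▲ with x ≠ 0 and Σ_i x_i < 1, and let x' := x/(Σ_i x_i) be its rescaling onto the unit simplex Δ. Then x' ∈ Δ and x' is a strictly better solution of the Lasso instance (Ã, b̃): ‖Ãx' − b̃‖₂ < ‖Ãx − b̃‖₂. -/
open Matrix BigOperators

/-- Euclidean norm of a vector over a finite index type. -/
noncomputable def l2 {ι : Type*} [Fintype ι] (v : ι → ℝ) : ℝ := Real.sqrt (∑ k, v k ^ 2)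

/-!
Write `p = -b̃`. The points `y` with `‖y‖² < ⟪y, p⟫` form the open ball with diameter `[0, p]`
(Thales). Each column of `A` lies in it, since `‖A_i‖² < D² = (D² / σ) · σ ≤ ⟪A_i, p⟫`, hence so
does the weighted mean `y` of the columns with weights `x`. The residual of `x` is the point of the
segment from `y` to `p` at parameter `1 - ∑ i, x i`, and that of the rescaled `x'` is `y` itself.
As the angle at `y` between `0` and `p` is obtuse, the distance to `0` increases along this segment.
-/

section Residual

variable {κ 𝕜 M : Type*} [Field 𝕜] [AddCommGroup M] [Module 𝕜 M]

lemma sum_smul_add_sub_eq_lineMap_centerMass (t : Finset κ) {c : κ → 𝕜} (hc : ∑ i ∈ t, c i ≠ 0)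
    (a : κ → M) (b : M) :
    ∑ i ∈ t, c i • (a i + b) - b
      = AffineMap.lineMap (t.centerMass c a) (-b) (1 - ∑ i ∈ t, c i) := by
  have hmean : (∑ i ∈ t, c i) • t.centerMass c a = ∑ i ∈ t, c i • a i :=
    smul_inv_smul₀ hc _
  rw [AffineMap.lineMap_apply_module, sub_sub_cancel, hmean]
  simp only [smul_add, Finset.sum_add_distrib, ← Finset.sum_smul]
  module

end Residual

lemma inv_sum_smul_mem_stdSimplex {κ 𝕜 : Type*} [Fintype κ] [Field 𝕜] [LinearOrder 𝕜]
    [IsStrictOrderedRing 𝕜] {x : κ → 𝕜} (hx0 : ∀ i, 0 ≤ x i) (hx : x ≠ 0) :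
    (∑ i, x i)⁻¹ • x ∈ stdSimplex 𝕜 κ := by
  have hpos : 0 < ∑ i, x i := Fintype.sum_pos (lt_of_le_of_ne hx0 hx.symm)
  refine ⟨fun i => mul_nonneg (inv_nonneg.mpr hpos.le) (hx0 i), ?_⟩
  simp only [Pi.smul_apply, ← Finset.smul_sum]
  exact inv_mul_cancel₀ hpos.ne'

section InnerProductSpace

open scoped RealInnerProductSpace

variable {E : Type*} [NormedAddCommGroup E] [InnerProductSpace ℝ E]

lemma setOf_norm_sq_lt_inner_eq_ball (p : E) :
    {y : E | ‖y‖ ^ 2 < ⟪y, p⟫} = Metric.ball ((1 / 2 : ℝ) • p) (‖p‖ / 2) := by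
  ext y
  have hsq : ‖y - (1 / 2 : ℝ) • p‖ ^ 2 = ‖y‖ ^ 2 - ⟪y, p⟫ + (‖p‖ / 2) ^ 2 := by
    rw [norm_sub_sq_real, real_inner_smul_right, norm_smul, Real.norm_of_nonneg (by norm_num)]
    ring
  rw [Set.mem_ofPred_eq, mem_ball_iff_norm, ← sq_lt_sq₀ (norm_nonneg _) (by positivity), hsq,
    add_lt_iff_neg_right, sub_neg]

lemma convex_setOf_norm_sq_lt_inner (p : E) : Convex ℝ {y : E | ‖y‖ ^ 2 < ⟪y, p⟫} := by
  rw [setOf_norm_sq_lt_inner_eq_ball]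
  exact convex_ball _ _

lemma norm_lt_norm_lineMap_of_norm_sq_lt_inner {y p : E} (h : ‖y‖ ^ 2 < ⟪y, p⟫) {t : ℝ}
    (ht : 0 < t) : ‖y‖ < ‖AffineMap.lineMap y p t‖ := by
  have hobtuse : 0 < ⟪y, p - y⟫ := by
    rwa [inner_sub_right, real_inner_self_eq_norm_sq, sub_pos]
  refine lt_of_pow_lt_pow_left₀ 2 (norm_nonneg _) ?_
  calc ‖y‖ ^ 2 < ‖y‖ ^ 2 + 2 * (t * ⟪y, p - y⟫) + ‖t • (p - y)‖ ^ 2 := by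
        linarith [mul_pos ht hobtuse, sq_nonneg ‖t • (p - y)‖]
    _ = ‖AffineMap.lineMap y p t‖ ^ 2 := by
        rw [AffineMap.lineMap_apply_module', add_comm _ y, norm_add_sq_real, real_inner_smul_right]

lemma norm_sq_lt_inner_of_le_inner_div_norm {a w : E} {σ D : ℝ} (hσ : 0 < σ)
    (hsep : σ ≤ ⟪a, w⟫ / ‖w‖) (haD : ‖a‖ < D) : ‖a‖ ^ 2 < ⟪a, (D ^ 2 / σ / ‖w‖) • w⟫ :=
  calc ‖a‖ ^ 2 < D ^ 2 := by gcongr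
    _ = D ^ 2 / σ * σ := by field_simp
    _ ≤ D ^ 2 / σ * (⟪a, w⟫ / ‖w‖) := by gcongr
    _ = ⟪a, (D ^ 2 / σ / ‖w‖) • w⟫ := by rw [real_inner_smul_right]; ring

theorem scaling_improves_general {κ : Type*} [Fintype κ] (a : κ → E) (b : E)
    (hab : ∀ i, ‖a i‖ ^ 2 < ⟪a i, -b⟫) {x : κ → ℝ} (hx0 : ∀ i, 0 ≤ x i) (hx1 : ∑ i, x i < 1)
    (hx : x ≠ 0) :
    (∑ i, x i)⁻¹ • x ∈ stdSimplex ℝ κ ∧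
      ‖∑ i, ((∑ j, x j)⁻¹ • x) i • (a i + b) - b‖ < ‖∑ i, x i • (a i + b) - b‖ := by
  have hpos : 0 < ∑ i, x i := Fintype.sum_pos (lt_of_le_of_ne hx0 hx.symm)
  have hmem := inv_sum_smul_mem_stdSimplex hx0 hx
  have hmean : ‖Finset.univ.centerMass x a‖ ^ 2 < ⟪Finset.univ.centerMass x a, -b⟫ :=
    (convex_setOf_norm_sq_lt_inner (-b)).centerMass_mem (fun i _ => hx0 i) hpos fun i _ => hab i
  have hres : ∑ i, ((∑ j, x j)⁻¹ • x) i • (a i + b) - b = Finset.univ.centerMass x a := by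
    rw [sum_smul_add_sub_eq_lineMap_centerMass _ (hmem.2.trans_ne one_ne_zero), hmem.2, sub_self,
      AffineMap.lineMap_apply_zero, Finset.centerMass_smul_left (hc := inv_ne_zero hpos.ne')]
  refine ⟨hmem, ?_⟩
  rw [hres, sum_smul_add_sub_eq_lineMap_centerMass _ hpos.ne']
  exact norm_lt_norm_lineMap_of_norm_sq_lt_inner hmean (sub_pos.mpr hx1)

end InnerProductSpace

section EuclideanSpace

open WithLp

variable {ι κ : Type*} [Fintype ι] [Fintype κ]

lemma l2_eq_norm_toLp (v : ι → ℝ) : l2 v = ‖toLp 2 v‖ := by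
  simp only [l2, EuclideanSpace.norm_eq, Real.norm_eq_abs, sq_abs]

lemma l2_mulVec_sub (A : Matrix ι κ ℝ) (b : ι → ℝ) (x : κ → ℝ) :
    l2 ((Matrix.of fun k i => A k i + b k).mulVec x - b)
      = ‖∑ i, x i • (toLp 2 (Aᵀ i) + toLp 2 b) - toLp 2 b‖ := by
  rw [l2_eq_norm_toLp, toLp_sub, Matrix.mulVec_eq_sum, toLp_sum]
  simp only [op_smul_eq_smul, toLp_smul, ← toLp_add]
  rfl

lemma norm_sq_toLp_lt_inner_of_separating {a w : ι → ℝ} {σ D : ℝ} (hσ : 0 < σ)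
    (hsep : σ ≤ a ⬝ᵥ w / l2 w) (haD : l2 a < D) :
    ‖toLp 2 a‖ ^ 2 < inner ℝ (toLp 2 a) (-toLp 2 fun k => -(D ^ 2 / σ) * (w k / l2 w)) := by
  have hb : -toLp 2 (fun k => -(D ^ 2 / σ) * (w k / l2 w))
      = (D ^ 2 / σ / ‖toLp 2 w‖) • toLp 2 w := by
    ext k
    simp only [← l2_eq_norm_toLp, PiLp.neg_apply, PiLp.smul_apply, smul_eq_mul]
    ring
  rw [l2_eq_norm_toLp] at hsep haD
  rw [hb]
  refine norm_sq_lt_inner_of_le_inner_div_norm hσ ?_ haD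
  rwa [EuclideanSpace.inner_toLp_toLp, star_trivial, dotProduct_comm]

end EuclideanSpace

/-- Scaling up improves for non-negative vectors: if `x ≠ 0` lies in the filled simplex
with `Σᵢ xᵢ < 1`, then its rescaling `x' = x / (Σᵢ xᵢ)` lies in the unit simplex and is a
strictly better solution of the Lasso instance `(Ã, b̃)`, where `b̃ = −(D²/σ)·w/‖w‖₂` and
`Ã = A + b̃·1ᵀ`. -/
theorem scaling_improves {d n : ℕ} (hn : 0 < n) (A : Matrix (Fin d) (Fin n) ℝ)
    (σ D : ℝ) (hσ : 0 < σ) (hD : 0 < D)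
    (w : Fin d → ℝ) (hw : w ≠ 0)
    (hsep : ∀ i, (Aᵀ i) ⬝ᵥ w / l2 w ≥ σ)
    (hAD : ∀ i, l2 (Aᵀ i) < D)
    (x : Fin n → ℝ) (hx0 : ∀ i, 0 ≤ x i) (hx1 : ∑ i, x i < 1) (hx : x ≠ 0) :
    let bt : Fin d → ℝ := fun k => -(D ^ 2 / σ) * (w k / l2 w)
    let Atil : Matrix (Fin d) (Fin n) ℝ := Matrix.of fun k i => A k i + bt k
    let x' : Fin n → ℝ := (∑ i, x i)⁻¹ • x
    (∀ i, 0 ≤ x' i) ∧ (∑ i, x' i = 1) ∧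
      l2 (Atil.mulVec x' - bt) < l2 (Atil.mulVec x - bt) := by
  intro bt Atil x'
  rw [l2_mulVec_sub A bt x', l2_mulVec_sub A bt x, ← and_assoc]
  exact scaling_improves_general _ _
    (fun i => norm_sq_toLp_lt_inner_of_separating hσ (hsep i) (hAD i)) hx0 hx1 hx
end

section
/- All optimal solutions of the constructed Lasso instance lie in the unit simplex: if x* ∈ ℝⁿ satisfies ‖x*‖₁ ≤ 1 and ‖Ãx* − b̃‖₂ ≤ ‖Ãx − b̃‖₂ for all x with ‖x‖₁ ≤ 1, then x* ≥ 0 entrywise and Σ_i x*_i = 1, i.e. x* ∈ Δ. In particular the optimal solutions of the Lasso instance (Ã, b̃) over the ℓ1-ball and of the SVM min_{x∈Δ}‖Ax‖₂² coincide. -/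
open Matrix BigOperators

/-!
Let `a i` be the columns of `A`. On the unit simplex the shift cancels: if `∑ i, y i = 1`, then
`∑ i, y i • (a i + b) - b = ∑ i, y i • a i`, so there the Lasso and SVM objectives agree.
The vector `b` is chosen so long that `⟪a i, a j + b⟫ < 0` for all `i` and `j`. A point `x` of the
`ℓ¹`-ball outside the simplex lies strictly below some `y` of the simplex, and passing from `y` to
`x` subtracts `∑ j, (y j - x j) • (a j + b)` from the residual `∑ i, y i • a i`. These two vectors
have negative inner product, so the residual at `x` is strictly longer.
-/

open scoped RealInnerProductSpace

theorem setOf_isMinOn_eq_of_exists_lt {α β : Type*} [Preorder β] {f g : α → β} {S T : Set α}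
    (hTS : T ⊆ S) (hfg : Set.EqOn f g T) (hlt : ∀ x ∈ S \ T, ∃ y ∈ T, f y < f x) :
    {x | x ∈ S ∧ IsMinOn f S x} = {x | x ∈ T ∧ IsMinOn g T x} := by
  ext x
  refine ⟨fun ⟨hxS, hmin⟩ => ?_, fun ⟨hxT, hmin⟩ => ⟨hTS hxT, fun z hzS => ?_⟩⟩
  · have hxT : x ∈ T := by
      by_contra hxT
      obtain ⟨y, hyT, hyx⟩ := hlt x ⟨hxS, hxT⟩
      exact hyx.not_ge (hmin (hTS hyT))
    exact ⟨hxT, (hmin.on_subset hTS).congr (Filter.eventuallyEq_principal.2 hfg) (hfg hxT)⟩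
  · have hle : ∀ y ∈ T, f x ≤ f y := fun y hyT => by
      rw [hfg hxT, hfg hyT]
      exact hmin hyT
    by_cases hzT : z ∈ T
    · exact hle z hzT
    · obtain ⟨y, hyT, hyz⟩ := hlt z ⟨hzS, hzT⟩
      exact (hle y hyT).trans hyz.le

section L1Ball

variable {ι : Type*} [Fintype ι]

variable (ι) in
/-- The closed unit ball of the `ℓ¹`-norm, the feasible set of the Lasso. It is a set of plain
functions, since the norm that `ι → ℝ` carries is the sup norm. -/
def l1Ball : Set (ι → ℝ) := {x | ∑ i, |x i| ≤ 1}

theorem stdSimplex_subset_l1Ball : stdSimplex ℝ ι ⊆ l1Ball ι := fun x hx =>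
  calc ∑ i, |x i| = ∑ i, x i := Finset.sum_congr rfl fun i _ => abs_of_nonneg (hx.1 i)
    _ ≤ 1 := hx.2.le

theorem exists_mem_stdSimplex_ge [Nonempty ι] {x : ι → ℝ} (hx : x ∈ l1Ball ι) :
    ∃ y ∈ stdSimplex ℝ ι, x ≤ y := by
  classical
  obtain ⟨i₀⟩ := ‹Nonempty ι›
  have hsum : ∑ i, x⁺ i ≤ 1 :=
    (Finset.sum_le_sum fun i _ => max_le (le_abs_self (x i)) (abs_nonneg (x i))).trans hx
  have hsingle : (0 : ι → ℝ) ≤ Pi.single i₀ (1 - ∑ i, x⁺ i) :=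
    Pi.single_nonneg.2 (sub_nonneg.2 hsum)
  refine ⟨x⁺ + Pi.single i₀ (1 - ∑ i, x⁺ i), ⟨add_nonneg (posPart_nonneg x) hsingle, ?_⟩,
    le_add_of_le_of_nonneg (le_posPart x) hsingle⟩
  simp only [Pi.add_apply, Finset.sum_add_distrib, Fintype.sum_pi_single', add_sub_cancel]

end L1Ball

section InnerProductSpace

variable {ι E : Type*} [Fintype ι] [SeminormedAddCommGroup E] [InnerProductSpace ℝ E]

/-- The optimal solutions of the Lasso instance `min ‖∑ i, x i • a i - b‖` over the `ℓ¹`-ball,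
where `a` is the family of columns of the data matrix. -/
def lassoOptima (a : ι → E) (b : E) : Set (ι → ℝ) :=
  {x | x ∈ l1Ball ι ∧ IsMinOn (fun x : ι → ℝ => ‖∑ i, x i • a i - b‖) (l1Ball ι) x}

/-- The optimal solutions of the hard-margin SVM `min ‖∑ i, x i • a i‖` over the unit simplex,
where `a` is the family of columns of the data matrix. -/
def svmOptima (a : ι → E) : Set (ι → ℝ) :=
  {x | x ∈ stdSimplex ℝ ι ∧ IsMinOn (fun x : ι → ℝ => ‖∑ i, x i • a i‖) (stdSimplex ℝ ι) x}

theorem norm_lt_norm_sub_of_inner_neg {u v : E} (h : ⟪u, v⟫ < 0) : ‖u‖ < ‖u - v‖ := by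
  refine lt_of_pow_lt_pow_left₀ 2 (norm_nonneg _) ?_
  rw [norm_sub_sq_real]
  linarith [sq_nonneg ‖v‖]

theorem inner_sum_smul_neg {u : E} {a : ι → E} {c : ι → ℝ} (hc : 0 < c)
    (h : ∀ i, ⟪u, a i⟫ < 0) : ⟪u, ∑ i, c i • a i⟫ < 0 := by
  obtain ⟨hc₀, i, hi⟩ := Pi.lt_def.1 hc
  simp only [inner_sum, real_inner_smul_right]
  exact Finset.sum_neg' (fun j _ => mul_nonpos_of_nonneg_of_nonpos (hc₀ j) (h j).le)
    ⟨i, Finset.mem_univ i, mul_neg_of_pos_of_neg hi (h i)⟩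

theorem sum_smul_add_sub_of_sum_eq_one (a : ι → E) (b : E) {y : ι → ℝ} (hy : ∑ i, y i = 1) :
    ∑ i, y i • (a i + b) - b = ∑ i, y i • a i := by
  simp only [smul_add, Finset.sum_add_distrib, ← Finset.sum_smul, hy, one_smul,
    add_sub_cancel_right]

theorem norm_sum_smul_add_sub_lt_of_lt {a : ι → E} {b : E} (hab : ∀ i j, ⟪a i, a j + b⟫ < 0)
    {x y : ι → ℝ} (hy : y ∈ stdSimplex ℝ ι) (hxy : x < y) :
    ‖∑ i, y i • (a i + b) - b‖ < ‖∑ i, x i • (a i + b) - b‖ := by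
  have hy_ne : y ≠ 0 := by
    rintro rfl
    simpa using hy.2
  have hy_pos : 0 < y := lt_of_le_of_ne hy.1 hy_ne.symm
  have hres : ∀ j, ⟪∑ i, y i • a i, a j + b⟫ < 0 := fun j => by
    rw [real_inner_comm]
    exact inner_sum_smul_neg hy_pos fun i => by simpa only [real_inner_comm] using hab i j
  have hdiff : ∑ i, x i • (a i + b) - b
      = ∑ i, y i • a i - ∑ i, (y - x) i • (a i + b) := by
    rw [← sum_smul_add_sub_of_sum_eq_one a b hy.2]
    simp only [Pi.sub_apply, sub_smul, Finset.sum_sub_distrib]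
    abel
  rw [sum_smul_add_sub_of_sum_eq_one a b hy.2, hdiff]
  exact norm_lt_norm_sub_of_inner_neg (inner_sum_smul_neg (sub_pos.2 hxy) hres)

theorem lassoOptima_add_eq_svmOptima [Nonempty ι] {a : ι → E} {b : E}
    (hab : ∀ i j, ⟪a i, a j + b⟫ < 0) :
    lassoOptima (fun i => a i + b) b = svmOptima a := by
  refine setOf_isMinOn_eq_of_exists_lt stdSimplex_subset_l1Ball
    (fun y hy => congrArg norm (sum_smul_add_sub_of_sum_eq_one a b hy.2)) ?_
  rintro x ⟨hx, hx_notMem⟩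
  obtain ⟨y, hy, hxy⟩ := exists_mem_stdSimplex_ge hx
  have hne : x ≠ y := fun h => hx_notMem (h ▸ hy)
  exact ⟨y, hy, norm_sum_smul_add_sub_lt_of_lt hab hy (lt_of_le_of_ne hxy hne)⟩

theorem inner_add_neg_smul_neg_of_le_inner_div_norm {u v w : E} {σ D : ℝ} (hσ : 0 < σ)
    (hu : ‖u‖ < D) (hv : ‖v‖ < D) (hsep : σ ≤ ⟪u, w⟫ / ‖w‖) :
    ⟪u, v + -(D ^ 2 / σ) • ‖w‖⁻¹ • w⟫ < 0 := by
  have huv : ⟪u, v⟫ < D ^ 2 := calc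
    ⟪u, v⟫ ≤ ‖u‖ * ‖v‖ := real_inner_le_norm u v
    _ < D * D := mul_lt_mul'' hu hv (norm_nonneg u) (norm_nonneg v)
    _ = D ^ 2 := (sq D).symm
  have huw : D ^ 2 ≤ D ^ 2 / σ * (⟪u, w⟫ / ‖w‖) := calc
    D ^ 2 = D ^ 2 / σ * σ := (div_mul_cancel₀ _ hσ.ne').symm
    _ ≤ D ^ 2 / σ * (⟪u, w⟫ / ‖w‖) := by gcongr
  calc ⟪u, v + -(D ^ 2 / σ) • ‖w‖⁻¹ • w⟫
      = ⟪u, v⟫ - D ^ 2 / σ * (⟪u, w⟫ / ‖w‖) := by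
        simp only [inner_add_right, real_inner_smul_right]
        ring
    _ < 0 := by linarith

theorem lasso_optima_in_simplex_general [Nonempty ι] {a : ι → E} {b w : E} {σ D : ℝ} (hσ : 0 < σ)
    (hsep : ∀ i, ⟪a i, w⟫ / ‖w‖ ≥ σ) (haD : ∀ i, ‖a i‖ < D)
    (hb : b = -(D ^ 2 / σ) • ‖w‖⁻¹ • w) :
    lassoOptima (fun i => a i + b) b ⊆ stdSimplex ℝ ι ∧
      lassoOptima (fun i => a i + b) b = svmOptima a := by
  have heq : lassoOptima (fun i => a i + b) b = svmOptima a :=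
    lassoOptima_add_eq_svmOptima fun i j =>
      hb ▸ inner_add_neg_smul_neg_of_le_inner_div_norm hσ (haD i) (haD j) (hsep i)
  exact ⟨heq.subset.trans fun _ hx => hx.1, heq⟩

end InnerProductSpace

section Coordinates

variable {m n : Type*} [Fintype n]

theorem toLp_mulVec (A : Matrix m n ℝ) (x : n → ℝ) :
    WithLp.toLp 2 (A *ᵥ x) = ∑ j, x j • WithLp.toLp 2 (Aᵀ j) := by
  simp only [mulVec_eq_sum, WithLp.toLp_sum, op_smul_eq_smul, WithLp.toLp_smul]

variable [Fintype m]

theorem l2_eq_norm_toLp_s15 (v : m → ℝ) : l2 v = ‖WithLp.toLp 2 v‖ := by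
  simp only [l2, EuclideanSpace.norm_eq, Real.norm_eq_abs, sq_abs]

theorem dotProduct_div_l2 (v w : m → ℝ) :
    v ⬝ᵥ w / l2 w = ⟪WithLp.toLp 2 v, WithLp.toLp 2 w⟫ / ‖WithLp.toLp 2 w‖ := by
  rw [l2_eq_norm_toLp_s15, EuclideanSpace.inner_toLp_toLp, star_trivial, dotProduct_comm]

theorem toLp_mul_div_l2 (c : ℝ) (w : m → ℝ) :
    WithLp.toLp 2 (fun k => c * (w k / l2 w))
      = c • ‖WithLp.toLp 2 w‖⁻¹ • WithLp.toLp 2 w := by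
  ext k
  simp only [l2_eq_norm_toLp_s15, div_eq_inv_mul, PiLp.smul_apply, smul_eq_mul]

theorem lassoOptima_toLp_transpose (A : Matrix m n ℝ) (b : m → ℝ) :
    lassoOptima (fun j => WithLp.toLp 2 (Aᵀ j)) (WithLp.toLp 2 b)
      = {x | ∑ i, |x i| ≤ 1 ∧
          ∀ y : n → ℝ, ∑ i, |y i| ≤ 1 → l2 (A *ᵥ x - b) ≤ l2 (A *ᵥ y - b)} := by
  simp only [l2_eq_norm_toLp_s15, WithLp.toLp_sub, toLp_mulVec]
  rfl

theorem svmOptima_toLp_transpose (A : Matrix m n ℝ) :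
    svmOptima (fun j => WithLp.toLp 2 (Aᵀ j))
      = {x | ((∀ i, 0 ≤ x i) ∧ ∑ i, x i = 1) ∧
          ∀ y : n → ℝ, (∀ i, 0 ≤ y i) → ∑ i, y i = 1 → l2 (A *ᵥ x) ≤ l2 (A *ᵥ y)} := by
  simp only [l2_eq_norm_toLp_s15, toLp_mulVec, ← and_imp]
  rfl

end Coordinates

/-- All optimal solutions of the constructed Lasso instance `(Ã, b̃)` (with
`b̃ = −(D²/σ)·w/‖w‖₂`, `Ã = A + b̃·1ᵀ`) lie in the unit simplex; in particular the set of
optimal Lasso solutions over the ℓ1-ball coincides with the set of optimal SVM solutions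
of `min_{x ∈ Δ} ‖Ax‖₂²`. -/
theorem lasso_optima_in_simplex {d n : ℕ} (hn : 0 < n) (A : Matrix (Fin d) (Fin n) ℝ)
    (σ D : ℝ) (hσ : 0 < σ) (hD : 0 < D)
    (w : Fin d → ℝ) (hw : w ≠ 0)
    (hsep : ∀ i, (Aᵀ i) ⬝ᵥ w / l2 w ≥ σ)
    (hAD : ∀ i, l2 (Aᵀ i) < D) :
    let bt : Fin d → ℝ := fun k => -(D ^ 2 / σ) * (w k / l2 w)
    let Atil : Matrix (Fin d) (Fin n) ℝ := Matrix.of fun k i => A k i + bt k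
    (∀ xs : Fin n → ℝ, (∑ i, |xs i| ≤ 1) →
      (∀ x : Fin n → ℝ, (∑ i, |x i| ≤ 1) →
        l2 (Atil.mulVec xs - bt) ≤ l2 (Atil.mulVec x - bt)) →
      (∀ i, 0 ≤ xs i) ∧ (∑ i, xs i = 1)) ∧
    {xs : Fin n → ℝ | (∑ i, |xs i| ≤ 1) ∧
        ∀ x : Fin n → ℝ, (∑ i, |x i| ≤ 1) →
          l2 (Atil.mulVec xs - bt) ≤ l2 (Atil.mulVec x - bt)} =
    {xs : Fin n → ℝ | ((∀ i, 0 ≤ xs i) ∧ (∑ i, xs i = 1)) ∧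
        ∀ x : Fin n → ℝ, (∀ i, 0 ≤ x i) → (∑ i, x i = 1) →
          l2 (A.mulVec xs) ≤ l2 (A.mulVec x)} := by
  intro bt Atil
  have : Nonempty (Fin n) := Fin.pos_iff_nonempty.1 hn
  obtain ⟨hsub, heq⟩ := lasso_optima_in_simplex_general hσ
    (fun i => dotProduct_div_l2 (Aᵀ i) w ▸ hsep i) (fun i => l2_eq_norm_toLp_s15 (Aᵀ i) ▸ hAD i)
    (toLp_mul_div_l2 (-(D ^ 2 / σ)) w)
  rw [← lassoOptima_toLp_transpose Atil bt, ← svmOptima_toLp_transpose A]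
  exact ⟨fun xs hxs hopt => hsub (lassoOptima_toLp_transpose Atil bt ▸ ⟨hxs, hopt⟩), heq⟩
end
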